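/- Let Σ be a real symmetric positive definite n×n matrix, σ > 0, and let A := I_n + σ^{−2}·Σ, with eigenvalues λ_1 ≥ λ_2 ≥ ⋯ ≥ λ_n > 1. For S ⊆ {1,…,n}, let A_S denote the principal submatrix of A with rows and columns indexed by S and define F(S) := det(A_S), with F(∅) := 1. Then for every integer K with 1 ≤ K ≤ n and all S, Ω ⊆ {1,…,n} with |Ω \ S| ≤ K and Ω \ S nonempty: Σ_{ω ∈ Ω\S} (F(S ∪ {ω}) − F(S)) ≥ (K·(λ_n − 1) / (Π_{j=1}^{K} λ_j − 1))·(F(S ∪ Ω) − F(S)). In particular the greedy submodularity ratio of F for budget K is at least K(λ_n − 1)/(Π_{j=1}^{K} λ_j − 1). -/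

import Mathlib

/-!
For `S` and `R = Ω \ S`, let `B = (A/S)_R` be the principal block on `R` of the Schur complement
of `A_S` in `A`. Then `F(S ∪ Ω) = F(S) · det B`, and the single gains add up to
`F(S) · (tr B - |R|)`. The eigenvalues `μ_i` of `B` are at least `l = λ_n`, so the theorem becomes
an inequality between `∏ μ_i - 1` and `∑ (μ_i - 1)`, given that `∏ μ_i · l ^ (K - |R|)` is at most
`λ_1 ⋯ λ_K`. It follows from `1 - 1/x ≤ log x ≤ x - 1`, applied to `∏ μ_i` and to each `μ_i`, and
Bernoulli's inequality for `l ^ (K - |R|)`.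

The bound by `λ_1 ⋯ λ_K` holds because `B ≤ A_R`, because enlarging `R` by one index multiplies
`det A_R` by at least `l`, and because a `K × K` principal minor of `A` is at most `λ_1 ⋯ λ_K`.
Instead of Cauchy interlacing, the last fact uses `M = max(λ_K, A)`: if `|R| = K`, then
`det A_R ≤ det M_R` and `det M_R · λ_K ^ (n - K) ≤ det M = λ_1 ⋯ λ_K · λ_K ^ (n - K)`.
-/

open Finset Matrix Polynomial

/-- The matrix `A = I_n + σ⁻²·Σ`. -/
noncomputable def detMat (n : ℕ) (σ : ℝ) (Sig : Matrix (Fin n) (Fin n) ℝ) :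
    Matrix (Fin n) (Fin n) ℝ :=
  (1 : Matrix (Fin n) (Fin n) ℝ) + (σ ^ 2)⁻¹ • Sig

/-- The determinantal objective `F(S) = det(A_S)`, where `A_S` is the principal
submatrix of `A = I_n + σ⁻²·Σ` with rows and columns indexed by `S`
(for `S = ∅` this is the determinant of the empty matrix, namely `1`). -/
noncomputable def detObjA (n : ℕ) (σ : ℝ) (Sig : Matrix (Fin n) (Fin n) ℝ)
    (S : Finset (Fin n)) : ℝ :=
  Matrix.det ((detMat n σ Sig).submatrix
    (fun i : S => (i : Fin n)) (fun j : S => (j : Fin n)))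

/-- The principal submatrix `A_S` of `A`, with rows and columns indexed by `S`. -/
def principalSubmatrix {ι α : Type*} (A : Matrix ι ι α) (S : Finset ι) : Matrix S S α :=
  A.submatrix (↑) (↑)

/-- The Schur complement `A/S = A - A_{*S} (A_S)⁻¹ A_{S*}` of the block `A_S` in `A`. It keeps the
index type of `A`, so that all `R` disjoint from `S` can be treated at once; the classical Schur
complement is its block outside `S`. If `A_S` is not invertible, its inverse is `0`, so
`A/S = A`. -/
noncomputable def schurCompl {ι α : Type*} [DecidableEq ι] [CommRing α] (A : Matrix ι ι α)
    (S : Finset ι) : Matrix ι ι α :=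
  A - A.submatrix id (Subtype.val : S → ι) * (principalSubmatrix A S)⁻¹ *
    A.submatrix (Subtype.val : S → ι) id

section Real

variable {ι : Type*} {s : Finset ι} {μ : ι → ℝ}

theorem prod_sub_one_le_sum_sub_one_mul_prod (hμ : ∀ i ∈ s, 0 < μ i) :
    ∏ i ∈ s, μ i - 1 ≤ (∑ i ∈ s, (μ i - 1)) * ∏ i ∈ s, μ i := by
  have hD : 0 < ∏ i ∈ s, μ i := prod_pos hμ
  have hlog : 1 - (∏ i ∈ s, μ i)⁻¹ ≤ ∑ i ∈ s, (μ i - 1) :=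
    calc 1 - (∏ i ∈ s, μ i)⁻¹ ≤ Real.log (∏ i ∈ s, μ i) := Real.one_sub_inv_le_log_of_pos hD
      _ = ∑ i ∈ s, Real.log (μ i) := Real.log_prod fun i hi => (hμ i hi).ne'
      _ ≤ ∑ i ∈ s, (μ i - 1) := sum_le_sum fun i hi => Real.log_le_sub_one_of_pos (hμ i hi)
  calc ∏ i ∈ s, μ i - 1 = (1 - (∏ i ∈ s, μ i)⁻¹) * ∏ i ∈ s, μ i := by
        rw [sub_mul, one_mul, inv_mul_cancel₀ hD.ne']
    _ ≤ _ := mul_le_mul_of_nonneg_right hlog hD.le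

theorem mul_prod_sub_one_le_prod_mul_pow_sub_one_mul_sum {l : ℝ} (hl : 1 ≤ l)
    (hμ : ∀ i ∈ s, l ≤ μ i) {K : ℕ} (hK : #s ≤ K) :
    K * (l - 1) * (∏ i ∈ s, μ i - 1) ≤
      ((∏ i ∈ s, μ i) * l ^ (K - #s) - 1) * ∑ i ∈ s, (μ i - 1) := by
  obtain ⟨k, rfl⟩ := Nat.exists_eq_add_of_le hK
  have hμ1 : ∀ i ∈ s, 1 ≤ μ i := fun i hi => hl.trans (hμ i hi)
  rw [Nat.add_sub_cancel_left, Nat.cast_add]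
  set P := ∏ i ∈ s, μ i
  set t := ∑ i ∈ s, (μ i - 1)
  have hP : 1 ≤ P := Finset.one_le_prod hμ1
  have ht : 0 ≤ t := sum_nonneg fun i hi => sub_nonneg.2 (hμ1 i hi)
  have hcard : #s * (l - 1) ≤ t := by
    rw [← nsmul_eq_mul]
    exact card_nsmul_le_sum s _ _ fun i hi => sub_le_sub_right (hμ i hi) 1
  have hprod : P - 1 ≤ t * P :=
    prod_sub_one_le_sum_sub_one_mul_prod fun i hi => one_pos.trans_le (hμ1 i hi)
  have hbern : 1 + k * (l - 1) ≤ l ^ k := one_add_mul_sub_le_pow (by linarith) k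
  calc (#s + k) * (l - 1) * (P - 1) = #s * (l - 1) * (P - 1) + k * (l - 1) * (P - 1) := by ring
    _ ≤ t * (P - 1) + k * (l - 1) * (t * P) := by gcongr
    _ = (P * (1 + k * (l - 1)) - 1) * t := by ring
    _ ≤ (P * l ^ k - 1) * t := by gcongr

end Real

section CommRing

variable {ι α : Type*} [DecidableEq ι] {S R : Finset ι}

theorem principalSubmatrix_union (A : Matrix ι ι α) (h : Disjoint S R) :
    (principalSubmatrix A (S ∪ R)).submatrix (Equiv.Finset.union S R h) (Equiv.Finset.union S R h) =
      fromBlocks (principalSubmatrix A S) (A.submatrix (↑) (↑)) (A.submatrix (↑) (↑))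
        (principalSubmatrix A R) := by
  ext (i | i) (j | j) <;> rfl

variable [CommRing α] {A : Matrix ι ι α}

theorem det_principalSubmatrix_univ [Fintype ι] : (principalSubmatrix A univ).det = A.det :=
  det_submatrix_equiv_self (Equiv.subtypeUnivEquiv Finset.mem_univ) A

theorem principalSubmatrix_schurCompl (A : Matrix ι ι α) (S R : Finset ι) :
    principalSubmatrix (schurCompl A S) R = principalSubmatrix A R -
      A.submatrix Subtype.val (Subtype.val : S → ι) * (principalSubmatrix A S)⁻¹ *
        A.submatrix (Subtype.val : S → ι) (Subtype.val : R → ι) :=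
  rfl

theorem det_principalSubmatrix_union (hA : IsUnit (principalSubmatrix A S)) (h : Disjoint S R) :
    (principalSubmatrix A (S ∪ R)).det =
      (principalSubmatrix A S).det * (principalSubmatrix (schurCompl A S) R).det := by
  have := hA.invertible
  rw [← det_submatrix_equiv_self (Equiv.Finset.union S R h), principalSubmatrix_union,
    det_fromBlocks₁₁, invOf_eq_nonsing_inv, principalSubmatrix_schurCompl]

theorem det_principalSubmatrix_insert (hA : IsUnit (principalSubmatrix A S)) {i : ι}
    (hi : i ∉ S) :
    (principalSubmatrix A (insert i S)).det =
      (principalSubmatrix A S).det * schurCompl A S i i := by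
  rw [insert_eq, union_comm, det_principalSubmatrix_union hA (disjoint_singleton_right.2 hi),
    det_unique (principalSubmatrix (schurCompl A S) _)]
  rfl

theorem sum_det_principalSubmatrix_insert_sub (hA : IsUnit (principalSubmatrix A S))
    (h : Disjoint S R) :
    ∑ i ∈ R, ((principalSubmatrix A (insert i S)).det - (principalSubmatrix A S).det) =
      (principalSubmatrix A S).det * ((principalSubmatrix (schurCompl A S) R).trace - #R) := by
  calc _ = ∑ i ∈ R, (principalSubmatrix A S).det * (schurCompl A S i i - 1) :=
        sum_congr rfl fun i hi => by
          rw [det_principalSubmatrix_insert hA (disjoint_right.1 h hi), mul_sub_one]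
    _ = _ := by
      rw [← mul_sum, sum_sub_distrib, sum_const, nsmul_one, ← sum_coe_sort]
      rfl

end CommRing

section Loewner

open scoped MatrixOrder ComplexOrder

variable {𝕜 ι : Type*} [RCLike 𝕜]

theorem principalSubmatrix_mono {A B : Matrix ι ι 𝕜} (h : A ≤ B) (S : Finset ι) :
    principalSubmatrix A S ≤ principalSubmatrix B S :=
  Matrix.PosSemidef.submatrix h _

theorem schurCompl_le [Finite ι] [DecidableEq ι] {A : Matrix ι ι 𝕜} (h : A.PosSemidef)
    (S : Finset ι) : schurCompl A S ≤ A := by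
  have hS : (principalSubmatrix A S)⁻¹.PosSemidef := (h.submatrix _).inv
  have hAH : A.submatrix id (Subtype.val : S → ι) = (A.submatrix (Subtype.val : S → ι) id)ᴴ := by
    rw [conjTranspose_submatrix, h.1.eq]
  refine sub_le_self _ ?_
  rw [hAH]
  exact (hS.conjTranspose_mul_mul_same _).nonneg

variable [Fintype ι] [DecidableEq ι] {A B : Matrix ι ι 𝕜} {c : ℝ} {S R T : Finset ι}

theorem isHermitian_of_algebraMap_le (h : algebraMap ℝ (Matrix ι ι 𝕜) c ≤ A) : A.IsHermitian :=
  ((IsSelfAdjoint.algebraMap _ (.all c)).of_ge h).isHermitian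

theorem posDef_of_algebraMap_le (hc : 0 < c) (h : algebraMap ℝ (Matrix ι ι 𝕜) c ≤ A) :
    A.PosDef := by
  have hcpos : (algebraMap ℝ (Matrix ι ι 𝕜) c).PosDef := by
    rw [Algebra.algebraMap_eq_smul_one]
    exact PosDef.one.smul hc
  simpa using PosDef.posSemidef_add h hcpos

theorem algebraMap_le_iff_le_eigenvalues (hA : A.IsHermitian) :
    algebraMap ℝ (Matrix ι ι 𝕜) c ≤ A ↔ ∀ i, c ≤ hA.eigenvalues i := by
  rw [algebraMap_le_iff_le_spectrum hA.isSelfAdjoint, hA.spectrum_real_eq_range_eigenvalues,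
    Set.forall_mem_range]

theorem pow_card_le_det (hc : 0 ≤ c) (h : algebraMap ℝ (Matrix ι ι 𝕜) c ≤ A) :
    (c : 𝕜) ^ Fintype.card ι ≤ A.det := by
  have hA := isHermitian_of_algebraMap_le h
  have hle := (algebraMap_le_iff_le_eigenvalues hA).1 h
  rw [hA.det_eq_prod_eigenvalues, ← Finset.card_univ, ← Finset.prod_const]
  exact_mod_cast Finset.prod_le_prod (fun _ _ => hc) fun i _ => hle i

theorem card_le_trace (h : 1 ≤ A) : (Fintype.card ι : 𝕜) ≤ A.trace := by
  simpa using (le_iff.1 h).trace_nonneg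

theorem det_le_det (hA : 0 ≤ A) (h : A ≤ B) : A.det ≤ B.det := by
  obtain ⟨P, rfl⟩ := CStarAlgebra.nonneg_iff_eq_star_mul_self.1 hA
  by_cases hP : IsUnit P.det
  · have hE : 1 ≤ star P⁻¹ * B * P⁻¹ := by
      calc 1 = star P⁻¹ * (star P * P) * P⁻¹ := by
            rw [← mul_assoc, ← star_mul, mul_assoc, P.mul_nonsing_inv hP, star_one, one_mul]
        _ ≤ star P⁻¹ * B * P⁻¹ := star_left_conjugate_le_conjugate h _
    have hdetE : 1 ≤ (star P⁻¹ * B * P⁻¹).det := by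
      simpa using pow_card_le_det zero_le_one ((map_one (algebraMap ℝ (Matrix ι ι 𝕜))).trans_le hE)
    have hB : star P * (star P⁻¹ * B * P⁻¹) * P = B := by
      rw [mul_assoc, mul_assoc, P.nonsing_inv_mul hP, mul_one, ← mul_assoc, ← star_mul,
        P.nonsing_inv_mul hP, star_one, one_mul]
    calc (star P * P).det = star P.det * 1 * P.det := by
          rw [det_mul, mul_one, star_eq_conjTranspose, det_conjTranspose]
      _ ≤ star P.det * (star P⁻¹ * B * P⁻¹).det * P.det := star_left_conjugate_le_conjugate hdetE _
      _ = B.det := by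
          rw [← det_conjTranspose, ← star_eq_conjTranspose, ← det_mul, ← det_mul, hB]
  · rw [det_mul, not_not.1 (isUnit_iff_ne_zero.not.1 hP), mul_zero]
    exact (nonneg_iff_posSemidef.1 (hA.trans h)).det_nonneg

theorem mul_det_sub_one_le_det_mul_pow_sub_one_mul_trace_sub_card {l : ℝ} (hl : 1 ≤ l)
    (hA : algebraMap ℝ (Matrix ι ι 𝕜) l ≤ A) {K : ℕ} (hK : Fintype.card ι ≤ K) :
    ((K * (l - 1) : ℝ) : 𝕜) * (A.det - 1) ≤
      (A.det * (l : 𝕜) ^ (K - Fintype.card ι) - 1) * (A.trace - Fintype.card ι) := by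
  have hH := isHermitian_of_algebraMap_le hA
  have hineq := mul_prod_sub_one_le_prod_mul_pow_sub_one_mul_sum hl
    (fun i _ => (algebraMap_le_iff_le_eigenvalues hH).1 hA i) hK
  rw [sum_sub_distrib, sum_const, nsmul_one, Finset.card_univ] at hineq
  rw [hH.det_eq_prod_eigenvalues, hH.trace_eq_sum_eigenvalues]
  exact_mod_cast hineq

theorem posSemidef_fromBlocks_sub_algebraMap (hc : 0 ≤ c)
    (h : algebraMap ℝ (Matrix ι ι 𝕜) c ≤ A) (hSR : Disjoint S R) :
    (fromBlocks (principalSubmatrix A S) (A.submatrix (↑) (↑)) (A.submatrix (↑) (↑))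
      (principalSubmatrix A R - algebraMap ℝ (Matrix R R 𝕜) c)).PosSemidef := by
  let D : Matrix ι ι 𝕜 := diagonal fun i => if i ∈ R then (c : 𝕜) else 0
  have hD : D ≤ algebraMap ℝ (Matrix ι ι 𝕜) c := by
    rw [le_iff, algebraMap_eq_diagonal, diagonal_sub]
    refine PosSemidef.diagonal fun i => ?_
    by_cases hi : i ∈ R <;> simp [hi, hc]
  have hAD : (A - D).PosSemidef := hD.trans h
  convert hAD.submatrix (Sum.elim (Subtype.val : S → ι) (Subtype.val : R → ι)) using 1
  ext (i | i) (j | j)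
  · simp [D, principalSubmatrix, diagonal_apply, disjoint_left.1 hSR i.2]
  · simp [D, diagonal_apply, disjoint_left.1 hSR i.2]
  · simp [D, disjoint_iff_ne.1 hSR.symm _ i.2 _ j.2]
  · simp [D, principalSubmatrix, diagonal_apply, algebraMap_matrix_apply]

theorem algebraMap_le_principalSubmatrix_schurCompl (hc : 0 < c)
    (h : algebraMap ℝ (Matrix ι ι 𝕜) c ≤ A) (hSR : Disjoint S R) :
    algebraMap ℝ (Matrix R R 𝕜) c ≤ principalSubmatrix (schurCompl A S) R := by
  have hS : (principalSubmatrix A S).PosDef :=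
    (posDef_of_algebraMap_le hc h).submatrix Subtype.val_injective
  have := hS.isUnit.invertible
  have hAH : A.submatrix (Subtype.val : R → ι) (Subtype.val : S → ι) =
      (A.submatrix (Subtype.val : S → ι) (Subtype.val : R → ι))ᴴ := by
    rw [conjTranspose_submatrix, (isHermitian_of_algebraMap_le h).eq]
  rw [le_iff, principalSubmatrix_schurCompl, hAH, sub_right_comm, ← hS.fromBlocks₁₁, ← hAH]
  exact posSemidef_fromBlocks_sub_algebraMap hc.le h hSR

theorem det_principalSubmatrix_mul_pow_le (hc : 0 < c) (h : algebraMap ℝ (Matrix ι ι 𝕜) c ≤ A)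
    (hRT : R ⊆ T) :
    (principalSubmatrix A R).det * (c : 𝕜) ^ (#T - #R) ≤ (principalSubmatrix A T).det := by
  have hR : (principalSubmatrix A R).PosDef :=
    (posDef_of_algebraMap_le hc h).submatrix Subtype.val_injective
  have hdisj : Disjoint R (T \ R) := disjoint_sdiff
  have hle : (c : 𝕜) ^ (#T - #R) ≤ (principalSubmatrix (schurCompl A R) (T \ R)).det := by
    rw [← card_sdiff_of_subset hRT, ← Fintype.card_coe]
    exact pow_card_le_det hc.le (algebraMap_le_principalSubmatrix_schurCompl hc h hdisj)
  calc (principalSubmatrix A R).det * (c : 𝕜) ^ (#T - #R)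
    _ ≤ (principalSubmatrix A R).det * (principalSubmatrix (schurCompl A R) (T \ R)).det :=
        mul_le_mul_of_nonneg_left hle hR.det_pos.le
    _ = (principalSubmatrix A T).det := by
        rw [← det_principalSubmatrix_union hR.isUnit hdisj, union_sdiff_of_subset hRT]

variable {lam : ι → ℝ}

theorem map_eigenvalues_eq_of_charpoly (hA : A.IsHermitian)
    (h : A.charpoly = ∏ i, (X - C (lam i : 𝕜))) :
    univ.val.map hA.eigenvalues = univ.val.map lam := by
  refine Multiset.map_injective (RCLike.ofReal_injective (K := 𝕜)) ?_
  rw [Multiset.map_map, Multiset.map_map, ← hA.roots_charpoly_eq_eigenvalues, h,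
    roots_prod _ _ (prod_ne_zero_iff.2 fun i _ => X_sub_C_ne_zero _)]
  simp

theorem forall_eigenvalues_iff_of_charpoly (hA : A.IsHermitian)
    (h : A.charpoly = ∏ i, (X - C (lam i : 𝕜))) (p : ℝ → Prop) :
    (∀ i, p (hA.eigenvalues i)) ↔ ∀ i, p (lam i) := by
  simpa using congrArg (fun s : Multiset ℝ => ∀ x ∈ s, p x) (map_eigenvalues_eq_of_charpoly hA h)

theorem det_cfc_of_charpoly (hA : A.IsHermitian)
    (h : A.charpoly = ∏ i, (X - C (lam i : 𝕜))) (f : ℝ → ℝ) :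
    (cfc f A).det = ∏ i, (f (lam i) : 𝕜) := by
  have hdet : (cfc f A).det = ∏ i, (f (hA.eigenvalues i) : 𝕜) := by
    rw [hA.cfc_eq, IsHermitian.cfc, Unitary.conjStarAlgAut_apply, det_mul_comm, ← mul_assoc]
    simp
  simpa [hdet, Multiset.map_map] using congrArg (fun s : Multiset ℝ => (s.map (f · : ℝ → 𝕜)).prod)
    (map_eigenvalues_eq_of_charpoly hA h)

theorem det_cfc_max_of_charpoly (hA : A.IsHermitian)
    (h : A.charpoly = ∏ i, (X - C (lam i : 𝕜))) (hT : ∀ i ∈ T, c ≤ lam i)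
    (hTc : ∀ i ∉ T, lam i ≤ c) :
    (cfc (max c) A).det = ((∏ i ∈ T, lam i : ℝ) : 𝕜) * (c : 𝕜) ^ (Fintype.card ι - #T) := by
  have hprodT : ∏ i ∈ T, max c (lam i) = ∏ i ∈ T, lam i :=
    prod_congr rfl fun i hi => max_eq_right (hT i hi)
  have hprodTc : ∏ i ∈ Tᶜ, max c (lam i) = c ^ (Fintype.card ι - #T) := by
    rw [prod_congr rfl fun i hi => max_eq_left (hTc i (mem_compl.1 hi)), prod_const, card_compl]
  rw [det_cfc_of_charpoly hA h, ← RCLike.ofReal_prod, ← prod_mul_prod_compl T, hprodT, hprodTc,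
    RCLike.ofReal_mul, RCLike.ofReal_pow]

theorem det_principalSubmatrix_le_prod (hA : A.PosDef)
    (h : A.charpoly = ∏ i, (X - C (lam i : 𝕜))) (hRT : #R = #T)
    (hT : ∀ i ∈ T, ∀ j ∉ T, lam j ≤ lam i) :
    (principalSubmatrix A R).det ≤ ((∏ i ∈ T, lam i : ℝ) : 𝕜) := by
  obtain rfl | hne := T.eq_empty_or_nonempty
  · obtain rfl : R = ∅ := card_eq_zero.1 hRT
    simp
  obtain ⟨k, hk, hmin⟩ := T.exists_min_image lam hne
  have hpos : 0 < lam k :=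
    (forall_eigenvalues_iff_of_charpoly hA.1 h (0 < ·)).1 hA.eigenvalues_pos k
  set M := cfc (max (lam k)) A with hM
  have hkM : algebraMap ℝ (Matrix ι ι 𝕜) (lam k) ≤ M :=
    algebraMap_le_cfc _ _ _ fun _ _ => le_max_left _ _
  have hAM : A ≤ M := by
    conv_lhs => rw [← cfc_id ℝ A hA.1.isSelfAdjoint]
    exact cfc_mono fun _ _ => le_max_right _ _
  have hMR : (principalSubmatrix M R).det * (lam k : 𝕜) ^ (Fintype.card ι - #T) ≤
      ((∏ i ∈ T, lam i : ℝ) : 𝕜) * (lam k : 𝕜) ^ (Fintype.card ι - #T) := by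
    rw [← det_cfc_max_of_charpoly hA.1 h hmin (hT k hk), ← hM, ← hRT,
      ← det_principalSubmatrix_univ (A := M)]
    exact det_principalSubmatrix_mul_pow_le hpos hkM (subset_univ R)
  calc (principalSubmatrix A R).det
    _ ≤ (principalSubmatrix M R).det :=
        det_le_det (hA.posSemidef.submatrix _).nonneg (principalSubmatrix_mono hAM R)
    _ ≤ _ := le_of_mul_le_mul_right hMR (pow_pos (RCLike.ofReal_pos.2 hpos) _)

theorem det_principalSubmatrix_schurCompl_mul_pow_le (hc : 0 < c)
    (hcA : algebraMap ℝ (Matrix ι ι 𝕜) c ≤ A)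
    (h : A.charpoly = ∏ i, (X - C (lam i : 𝕜))) (hSR : Disjoint S R)
    (hRT : #R ≤ #T) (hT : ∀ i ∈ T, ∀ j ∉ T, lam j ≤ lam i) :
    (principalSubmatrix (schurCompl A S) R).det * (c : 𝕜) ^ (#T - #R) ≤
      ((∏ i ∈ T, lam i : ℝ) : 𝕜) := by
  have hA : A.PosDef := posDef_of_algebraMap_le hc hcA
  obtain ⟨R', hRR', -, hR'T⟩ := exists_subsuperset_card_eq (subset_univ R) hRT (card_le_univ T)
  have hdet : (principalSubmatrix (schurCompl A S) R).det ≤ (principalSubmatrix A R).det :=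
    det_le_det
      ((posDef_of_algebraMap_le hc
        (algebraMap_le_principalSubmatrix_schurCompl hc hcA hSR)).posSemidef.nonneg)
      (principalSubmatrix_mono (schurCompl_le hA.posSemidef S) R)
  calc _ ≤ (principalSubmatrix A R).det * (c : 𝕜) ^ (#R' - #R) := by
        rw [hR'T]
        exact mul_le_mul_of_nonneg_right hdet (pow_nonneg (RCLike.ofReal_nonneg.2 hc.le) _)
    _ ≤ (principalSubmatrix A R').det := det_principalSubmatrix_mul_pow_le hc hcA hRR'
    _ ≤ _ := det_principalSubmatrix_le_prod hA h hR'T hT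

theorem detObjA_greedy_submodularity_ratio_general (hA : A.IsHermitian)
    (h : A.charpoly = ∏ i, (X - C (lam i : 𝕜))) {l : ℝ} (hl : 1 ≤ l) (hlam : ∀ i, l ≤ lam i)
    (hT : ∀ i ∈ T, ∀ j ∉ T, lam j ≤ lam i) {S Ω : Finset ι} (hΩ : #(Ω \ S) ≤ #T) :
    ((#T * (l - 1) : ℝ) : 𝕜) *
        ((principalSubmatrix A (S ∪ Ω)).det - (principalSubmatrix A S).det) ≤
      ((∏ i ∈ T, lam i - 1 : ℝ) : 𝕜) *
        ∑ ω ∈ Ω \ S, ((principalSubmatrix A (insert ω S)).det - (principalSubmatrix A S).det) := by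
  have hl0 : 0 < l := one_pos.trans_le hl
  have hlA : algebraMap ℝ (Matrix ι ι 𝕜) l ≤ A :=
    (algebraMap_le_iff_le_eigenvalues hA).2
      ((forall_eigenvalues_iff_of_charpoly hA h (l ≤ ·)).2 hlam)
  have hS : (principalSubmatrix A S).PosDef :=
    (posDef_of_algebraMap_le hl0 hlA).submatrix Subtype.val_injective
  have hdisj : Disjoint S (Ω \ S) := disjoint_sdiff
  set B := principalSubmatrix (schurCompl A S) (Ω \ S) with hB
  have hlB : algebraMap ℝ _ l ≤ B := algebraMap_le_principalSubmatrix_schurCompl hl0 hlA hdisj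
  have hone : 1 ≤ B := (map_one (algebraMap ℝ _)).symm.trans_le ((algebraMap_mono _ hl).trans hlB)
  have htrace : 0 ≤ B.trace - #(Ω \ S) := by
    rw [← Fintype.card_coe]
    exact sub_nonneg.2 (card_le_trace hone)
  have hdet : B.det * (l : 𝕜) ^ (#T - #(Ω \ S)) - 1 ≤ ((∏ i ∈ T, lam i - 1 : ℝ) : 𝕜) := by
    push_cast
    simpa using det_principalSubmatrix_schurCompl_mul_pow_le hl0 hlA h hdisj hΩ hT
  have hkey := mul_det_sub_one_le_det_mul_pow_sub_one_mul_trace_sub_card hl hlB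
    ((Fintype.card_coe _).trans_le hΩ)
  rw [Fintype.card_coe] at hkey
  rw [← union_sdiff_self_eq_union, det_principalSubmatrix_union hS.isUnit hdisj,
    sum_det_principalSubmatrix_insert_sub hS.isUnit hdisj, ← hB, ← mul_sub_one, mul_left_comm,
    mul_left_comm _ (principalSubmatrix A S).det]
  exact mul_le_mul_of_nonneg_left (hkey.trans (mul_le_mul_of_nonneg_right hdet htrace))
    hS.det_pos.le

end Loewner

/-- **Submodularity-ratio bound for the determinantal function.** Let `Σ` be
positive definite, `σ > 0`, and let `lam : Fin n → ℝ` list the eigenvalues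
`λ_1 ≥ ⋯ ≥ λ_n > 1` of `A = I + σ⁻²Σ` (i.e. `charpoly A = Π (X − λ_i)`). Then
for every `1 ≤ K ≤ n` and all `S, Ω` with `0 < |Ω\S| ≤ K`:
`Σ_{ω∈Ω\S} ρ_ω(S) ≥ (K(λ_n − 1)/(Π_{j=1}^K λ_j − 1))·ρ_Ω(S)`; in particular
the greedy submodularity ratio for budget `K` is at least this quantity. -/
theorem detObjA_greedy_submodularity_ratio (n : ℕ) (σ : ℝ) (hσ : 0 < σ)
    (Sig : Matrix (Fin n) (Fin n) ℝ) (hSig : Sig.PosDef)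
    (lam : Fin n → ℝ)
    (hsorted : ∀ i j : Fin n, i ≤ j → lam j ≤ lam i)
    (hgt : ∀ i : Fin n, 1 < lam i)
    (hchar : (detMat n σ Sig).charpoly = ∏ i : Fin n, (X - C (lam i)))
    (K : ℕ) (hK1 : 1 ≤ K) (hKn : K ≤ n) :
    ∀ S Ω : Finset (Fin n), (Ω \ S).card ≤ K → (Ω \ S).Nonempty →
      ∑ ω ∈ Ω \ S, (detObjA n σ Sig (insert ω S) - detObjA n σ Sig S) ≥
        ((K : ℝ) * (lam ⟨n - 1, by omega⟩ - 1) /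
            ((∏ j ∈ Finset.univ.filter (fun j : Fin n => (j : ℕ) < K), lam j) - 1)) *
          (detObjA n σ Sig (S ∪ Ω) - detObjA n σ Sig S) := by
  intro S Ω hΩK _
  have hlast : 1 < lam ⟨n - 1, by omega⟩ := hgt _
  set T : Finset (Fin n) := univ.filter fun j => (j : ℕ) < K with hT
  have hTK : #T = K := by rw [hT, Fin.card_filter_val_lt, min_eq_right hKn]
  have hprod : 1 < ∏ j ∈ T, lam j :=
    calc 1 = ∏ _j ∈ T, (1 : ℝ) := prod_const_one.symm
      _ < _ := prod_lt_prod_of_nonempty (fun _ _ => one_pos) (fun j _ => hgt j)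
        (card_pos.1 (hTK ▸ hK1))
  have htop : ∀ i ∈ T, ∀ j ∉ T, lam j ≤ lam i := fun i hi j hj => by
    simp only [hT, mem_filter_univ, not_lt] at hi hj
    exact hsorted i j (hi.le.trans hj)
  have hA : (detMat n σ Sig).IsHermitian := isHermitian_one.add (hSig.1.smul (.all _))
  have hgain := detObjA_greedy_submodularity_ratio_general hA hchar hlast.le
    (fun i => hsorted _ _ (Nat.le_sub_one_of_lt i.2)) htop (hΩK.trans_eq hTK.symm)
  rw [hTK] at hgain
  rw [ge_iff_le, div_mul_eq_mul_div, div_le_iff₀' (sub_pos.2 hprod)]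
  exact hgain
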